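/- arXiv:2005.04507 — 4 statements merged into one kernel-verified Lean document; each statement's English description precedes it below -/
import Mathlib

section
/- Let f : ℝ^d → ℝ be differentiable, ℓ-gradient Lipschitz (ℓ > 0), and α-strongly convex (0 < α ≤ ℓ), with global minimizer x*. Fix x₀ ∈ ℝ^d with x₀ ≠ x*, and define the gradient descent iterates x_{t+1} = x_t − η ∇f(x_t) with step size η = 1/ℓ. Then for every ε with 0 < ε ≤ ‖x₀ − x*‖ and every natural number T with T ≥ (2ℓ/α) · log(‖x₀ − x*‖ / ε), one has ‖x_T − x*‖ ≤ ε. -/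
/-!
Each gradient step contracts the squared distance to the minimizer by the factor `1 - α / ℓ`.
Writing `g = ∇f(x)` and `x⁺ = x - g / ℓ`, expand
`‖x⁺ - x*‖² = ‖x - x*‖² - (2/ℓ) ⟪g, x - x*⟫ + ‖g‖² / ℓ²`. Strong convexity bounds `⟪g, x - x*⟫`
below by `f x - f x* + (α/2) ‖x - x*‖²`, and the descent lemma (`le_quadratic_of_lipschitz_gradient`)
gives `f x* ≤ f x⁺ ≤ f x - ‖g‖² / (2ℓ)`, which absorbs the term `‖g‖² / ℓ²`.
Iterating, `‖x_T - x*‖² ≤ (1 - α/ℓ)^T ‖x₀ - x*‖² ≤ exp (-α T / ℓ) ‖x₀ - x*‖²`, and the lower bound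
on `T` makes the right-hand side at most `ε²`.
-/

open scoped RealInnerProductSpace

section

variable {E : Type*} [NormedAddCommGroup E] [InnerProductSpace ℝ E] [CompleteSpace E]

/-- The descent lemma: a function with `ℓ`-Lipschitz gradient lies below its quadratic upper model.
The difference between the two sides is monotone along the segment from `x` to `x + v`. -/
lemma le_quadratic_of_lipschitz_gradient {f : E → ℝ} {ℓ : ℝ} (hdiff : Differentiable ℝ f)
    (hlip : ∀ x y : E, ‖gradient f x - gradient f y‖ ≤ ℓ * ‖x - y‖) (x v : E) :
    f (x + v) ≤ f x + ⟪gradient f x, v⟫ + ℓ / 2 * ‖v‖ ^ 2 := by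
  let φ : ℝ → ℝ := fun t => f (x + t • v) - t * ⟪gradient f x, v⟫ - ℓ / 2 * ‖v‖ ^ 2 * t ^ 2
  have hφ : ∀ t, HasDerivAt φ
      (⟪gradient f (x + t • v), v⟫ - ⟪gradient f x, v⟫ - ℓ * ‖v‖ ^ 2 * t) t := by
    intro t
    have hline : HasDerivAt (fun t : ℝ => x + t • v) v t := by
      simpa using ((hasDerivAt_id t).smul_const v).const_add x
    have hf := (hdiff (x + t • v)).hasGradientAt.hasFDerivAt.comp_hasDerivAt t hline
    have hlin := (hasDerivAt_id t).mul_const ⟪gradient f x, v⟫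
    have hsq := ((hasDerivAt_id t).pow 2).const_mul (ℓ / 2 * ‖v‖ ^ 2)
    refine ((hf.sub hlin).sub hsq).congr_deriv ?_
    simp
    ring
  have hanti : AntitoneOn φ (Set.Icc 0 1) := by
    refine antitoneOn_of_deriv_nonpos (convex_Icc 0 1)
      (fun t _ => (hφ t).continuousAt.continuousWithinAt)
      (fun t _ => (hφ t).differentiableAt.differentiableWithinAt) ?_
    intro t ht
    rw [interior_Icc] at ht
    rw [(hφ t).deriv, ← inner_sub_left]
    have hcs := real_inner_le_norm (gradient f (x + t • v) - gradient f x) v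
    have hl := hlip (x + t • v) x
    rw [add_sub_cancel_left, norm_smul, Real.norm_of_nonneg ht.1.le] at hl
    have := mul_le_mul_of_nonneg_right hl (norm_nonneg v)
    nlinarith
  have h := hanti (Set.left_mem_Icc.2 zero_le_one) (Set.right_mem_Icc.2 zero_le_one) zero_le_one
  simp only [φ, one_smul, zero_smul, add_zero] at h
  linarith

lemma norm_gradient_step_sq_le {f : E → ℝ} {ℓ α : ℝ} (hℓ : 0 < ℓ) (hdiff : Differentiable ℝ f)
    (hlip : ∀ x y : E, ‖gradient f x - gradient f y‖ ≤ ℓ * ‖x - y‖)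
    (hsc : ∀ x y : E, f x + ⟪gradient f x, y - x⟫ + (α / 2) * ‖y - x‖ ^ 2 ≤ f y)
    {xstar : E} (hmin : ∀ y, f xstar ≤ f y) (x : E) :
    ‖x - (1 / ℓ) • gradient f x - xstar‖ ^ 2 ≤ (1 - α / ℓ) * ‖x - xstar‖ ^ 2 := by
  set g := gradient f x with hg
  have hdesc := le_quadratic_of_lipschitz_gradient hdiff hlip x (-((1 / ℓ) • g))
  have hm := hmin (x + -((1 / ℓ) • g))
  have hs := hsc x xstar
  rw [← hg] at hdesc hs
  rw [inner_neg_right, real_inner_smul_right, real_inner_self_eq_norm_sq, norm_neg, norm_smul,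
    Real.norm_of_nonneg (by positivity)] at hdesc
  rw [← neg_sub x xstar, inner_neg_right, norm_neg] at hs
  rw [sub_right_comm, norm_sub_sq_real, real_inner_smul_right, norm_smul,
    Real.norm_of_nonneg (by positivity), real_inner_comm]
  have hq : 1 / ℓ * ‖g‖ ^ 2 - ℓ / 2 * (1 / ℓ * ‖g‖) ^ 2 = ℓ / 2 * (1 / ℓ * ‖g‖) ^ 2 := by
    field_simp
    ring
  have key : ℓ / 2 * (1 / ℓ * ‖g‖) ^ 2 + α / 2 * ‖x - xstar‖ ^ 2 ≤ ⟪g, x - xstar⟫ := by linarith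
  have := mul_le_mul_of_nonneg_left key (show 0 ≤ 2 / ℓ by positivity)
  have e : 2 / ℓ * (ℓ / 2 * (1 / ℓ * ‖g‖) ^ 2 + α / 2 * ‖x - xstar‖ ^ 2)
      = (1 / ℓ * ‖g‖) ^ 2 + α / ℓ * ‖x - xstar‖ ^ 2 := by
    field_simp
  rw [e] at this
  have e2 : 2 / ℓ * ⟪g, x - xstar⟫ = 2 * (1 / ℓ * ⟪g, x - xstar⟫) := by ring
  linarith

end

/-- Linear convergence of gradient descent (step size `1/ℓ`) for an
`ℓ`-gradient-Lipschitz, `α`-strongly convex function with global minimizer `xstar`: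
after `T ≥ (2ℓ/α) log(‖x₀ - xstar‖/ε)` iterations, `‖x_T - xstar‖ ≤ ε`. -/
theorem stmt_1 {d : ℕ} (f : EuclideanSpace ℝ (Fin d) → ℝ)
    (ℓ α : ℝ) (hℓ : 0 < ℓ) (hα : 0 < α) (hαℓ : α ≤ ℓ)
    (hdiff : Differentiable ℝ f)
    (hlip : ∀ x y : EuclideanSpace ℝ (Fin d),
      ‖gradient f x - gradient f y‖ ≤ ℓ * ‖x - y‖)
    (hsc : ∀ x y : EuclideanSpace ℝ (Fin d),
      f x + ⟪gradient f x, y - x⟫ + (α / 2) * ‖y - x‖ ^ 2 ≤ f y)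
    (xstar : EuclideanSpace ℝ (Fin d)) (hmin : ∀ y, f xstar ≤ f y)
    (x₀ : EuclideanSpace ℝ (Fin d)) (hx₀ : x₀ ≠ xstar)
    (x : ℕ → EuclideanSpace ℝ (Fin d)) (hx0 : x 0 = x₀)
    (hxrec : ∀ t, x (t + 1) = x t - (1 / ℓ) • gradient f (x t)) :
    ∀ ε : ℝ, 0 < ε → ε ≤ ‖x₀ - xstar‖ →
      ∀ T : ℕ, (2 * ℓ / α) * Real.log (‖x₀ - xstar‖ / ε) ≤ T →
        ‖x T - xstar‖ ≤ ε := by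
  intro ε hε _ T hT
  have hr : 0 ≤ 1 - α / ℓ := by
    rw [sub_nonneg, div_le_one hℓ]
    exact hαℓ
  have hD : 0 < ‖x₀ - xstar‖ := norm_pos_iff.2 (sub_ne_zero.2 hx₀)
  have hiter : ∀ t, ‖x t - xstar‖ ^ 2 ≤ (1 - α / ℓ) ^ t * ‖x₀ - xstar‖ ^ 2 := by
    intro t
    induction t with
    | zero => simp [hx0]
    | succ t ih =>
      rw [hxrec, pow_succ' (1 - α / ℓ), mul_assoc]
      exact (norm_gradient_step_sq_le hℓ hdiff hlip hsc hmin (x t)).trans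
        (mul_le_mul_of_nonneg_left ih hr)
  have hpow : (1 - α / ℓ) ^ T ≤ (ε / ‖x₀ - xstar‖) ^ 2 := by
    have hlog : 2 * Real.log (‖x₀ - xstar‖ / ε) ≤ T * (α / ℓ) := by
      have := mul_le_mul_of_nonneg_right hT (show 0 ≤ α / ℓ by positivity)
      have e : 2 * ℓ / α * Real.log (‖x₀ - xstar‖ / ε) * (α / ℓ)
          = 2 * Real.log (‖x₀ - xstar‖ / ε) := by
        field_simp
      rwa [e] at this
    calc (1 - α / ℓ) ^ T ≤ Real.exp (-(α / ℓ)) ^ T :=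
          pow_le_pow_left₀ hr (Real.one_sub_le_exp_neg _) T
      _ = Real.exp (-(T * (α / ℓ))) := by rw [← Real.exp_nat_mul, mul_neg]
      _ ≤ Real.exp (2 * Real.log (ε / ‖x₀ - xstar‖)) := by
          rw [Real.exp_le_exp, ← inv_div ‖x₀ - xstar‖ ε, Real.log_inv]
          linarith
      _ = (ε / ‖x₀ - xstar‖) ^ 2 := by
          rw [two_mul, Real.exp_add, Real.exp_log (by positivity), sq]
  refine (sq_le_sq₀ (norm_nonneg _) hε.le).1 ?_
  calc ‖x T - xstar‖ ^ 2 ≤ (1 - α / ℓ) ^ T * ‖x₀ - xstar‖ ^ 2 := hiter T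
    _ ≤ (ε / ‖x₀ - xstar‖) ^ 2 * ‖x₀ - xstar‖ ^ 2 := by gcongr
    _ = ε ^ 2 := by field_simp
end

section
/- Let (Ω, ℱ, ℙ) be a probability space and let (Z_t)_{t ≥ 0} be a ℤ-valued stochastic process adapted to its natural filtration (ℱ_t)_{t ≥ 0}, ℱ_t = σ(Z_0, …, Z_t), such that almost surely |Z_{t+1} − Z_t| = 1 for every t, and such that for every t, almost surely the conditional probability satisfies ℙ(Z_{t+1} = Z_t − 1 ∣ ℱ_t) = w(R̃_t) / (w(L̃_t) + w(R̃_t)) and ℙ(Z_{t+1} = Z_t + 1 ∣ ℱ_t) = w(L̃_t) / (w(L̃_t) + w(R̃_t)), where R̃_t := #{s < t : Z_s = Z_t + 1} and L̃_t := #{s < t : Z_s = Z_t − 1} are the occupation counts of the two neighbors of the current position, and w : {0,1,2,…} → (0, ∞) is a monotone increasing function with w(n) → ∞ as n → ∞. Then ℙ( there exist t₀ > 0 and integers k ≤ ℓ such that Z_t ∈ {k, k+1, …, ℓ} for all t ≥ t₀ ) = 0; that is, almost surely the vertex-repelling random walk is not eventually confined to any finite set of points (it does not localize). -/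
open MeasureTheory Filter

/-!
Let `a` be the smallest integer visited infinitely often; it exists on the event that the walk is
eventually confined to a finite interval. The site `a - 1` is then visited only finitely often, so
`L` stays bounded by some `N` along the visits to `a`, and since `w` is increasing each of these
visits steps to `a - 1` with conditional probability at least `w 0 / (w N + w 0) > 0`. The
conditional probabilities of the steps `a → a - 1` therefore have an infinite sum, and Lévy's
conditional Borel–Cantelli lemma (`ae_mem_limsup_atTop_iff`) forces infinitely many visits to
`a - 1`, a contradiction.
-/

/-- A sequence of integers that is eventually confined to an interval takes some value `a`
infinitely often but `a - 1` only finitely often: take the least value taken infinitely often. -/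
lemma exists_least_frequently (z : ℕ → ℤ) (t₀ : ℕ) (k l : ℤ)
    (h : ∀ t, t₀ ≤ t → z t ∈ Set.Icc k l) :
    ∃ a : ℤ, (∃ᶠ t in atTop, z t = a) ∧ ¬ ∃ᶠ t in atTop, z t = a - 1 := by
  have hne : ∃ a : ℤ, ∃ᶠ t in atTop, z t = a := by
    by_contra! hcon
    have h1 : ∀ᶠ t in atTop, ∀ a ∈ Set.Icc k l, ¬ z t = a :=
      (eventually_all_finite (Set.finite_Icc k l)).2 fun a _ => hcon a
    obtain ⟨t, ht, hge⟩ := (h1.and (eventually_ge_atTop t₀)).exists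
    exact ht _ (h t hge) rfl
  have hbd : ∀ a : ℤ, (∃ᶠ t in atTop, z t = a) → k ≤ a := by
    intro a ha
    obtain ⟨t, rfl, hge⟩ := (ha.and_eventually (eventually_ge_atTop t₀)).exists
    exact (h t hge).1
  obtain ⟨a, ha, hmin⟩ := Int.exists_least_of_bdd ⟨k, hbd⟩ hne
  exact ⟨a, ha, fun h' => by have := hmin _ h'; omega⟩

/-- Nonnegative terms that are infinitely often at least `c > 0` have an infinite sum. -/
lemma tendsto_sum_of_frequently_ge (f : ℕ → ℝ) (hf : ∀ n, 0 ≤ f n) (c : ℝ) (hc : 0 < c)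
    (h : ∃ᶠ n in atTop, c ≤ f n) :
    Tendsto (fun n => ∑ i ∈ Finset.range n, f i) atTop atTop := by
  rw [← not_summable_iff_tendsto_nat_atTop_of_nonneg hf]
  intro hs
  refine h ?_
  filter_upwards [hs.tendsto_atTop_zero.eventually_lt_const hc] with n hn
  exact not_le.2 hn

/-- Non-localization of the vertex-repelling random walk: if the
nearest-neighbor walk `Z` steps left/right with conditional probabilities (given its
natural filtration) proportional to the occupation-time weights `w(R̃_t)` / `w(L̃_t)`,
where `w` is increasing and tends to infinity, then almost surely the walk is not
eventually confined to any finite interval `{k, …, l}` of integers. -/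
theorem stmt_2 {Ω : Type*} [MeasurableSpace Ω] (μ : Measure Ω) [IsProbabilityMeasure μ]
    (Z : ℕ → Ω → ℤ) (hZ : ∀ t, Measurable (Z t))
    (w : ℕ → ℝ) (hw_pos : ∀ n, 0 < w n) (hw_mono : Monotone w)
    (hw_tend : Tendsto w atTop atTop)
    (F : ℕ → MeasurableSpace Ω)
    (hF : ∀ t, F t = ⨆ s ∈ Finset.range (t + 1), MeasurableSpace.comap (Z s) inferInstance)
    (L R : ℕ → Ω → ℕ)
    (hL : ∀ t ω, L t ω = ((Finset.range t).filter (fun s => Z s ω = Z t ω - 1)).card)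
    (hR : ∀ t ω, R t ω = ((Finset.range t).filter (fun s => Z s ω = Z t ω + 1)).card)
    (hstep : ∀ t, ∀ᵐ ω ∂μ, |Z (t + 1) ω - Z t ω| = 1)
    (hdown : ∀ t,
      μ[Set.indicator {ω | Z (t + 1) ω = Z t ω - 1} (fun _ => (1 : ℝ)) | F t]
        =ᵐ[μ] fun ω => w (R t ω) / (w (L t ω) + w (R t ω)))
    (hup : ∀ t,
      μ[Set.indicator {ω | Z (t + 1) ω = Z t ω + 1} (fun _ => (1 : ℝ)) | F t]
        =ᵐ[μ] fun ω => w (L t ω) / (w (L t ω) + w (R t ω))) :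
    μ {ω | ∃ t₀ : ℕ, 0 < t₀ ∧ ∃ k l : ℤ, k ≤ l ∧ ∀ t, t₀ ≤ t → Z t ω ∈ Set.Icc k l} = 0 := by
  classical
  have hFle : ∀ t, F t ≤ (inferInstance : MeasurableSpace Ω) := by
    intro t
    rw [hF]
    exact iSup₂_le fun s _ => (hZ s).comap_le
  have hFmono : Monotone F := by
    intro s t hst
    rw [hF, hF]
    exact biSup_mono fun i hi => Finset.mem_range.2 (by have := Finset.mem_range.1 hi; omega)
  have hZF : ∀ s t, s ≤ t → Measurable[F t] (Z s) := by
    intro s t hst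
    rw [hF, measurable_iff_comap_le]
    exact le_iSup₂_of_le s (Finset.mem_range.2 (by omega)) le_rfl
  let ℱ : Filtration ℕ (inferInstance : MeasurableSpace Ω) := ⟨F, hFmono, hFle⟩
  -- `S a n` is the event that the `n`-th step is the one from `a` to `a - 1`; steps are numbered from `1`.
  let S : ℤ → ℕ → Set Ω := fun a n =>
    Nat.casesOn n ∅ fun m => {ω | Z m ω = a} ∩ {ω | Z (m + 1) ω = Z m ω - 1}
  have hdownset : ∀ m, MeasurableSet[F (m + 1)] {ω | Z (m + 1) ω = Z m ω - 1} := fun m =>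
    measurableSet_eq_fun (m := F (m + 1)) (hZF (m + 1) (m + 1) le_rfl)
      ((measurable_of_countable (fun z : ℤ => z - 1)).comp (hZF m (m + 1) (Nat.le_succ m)))
  have hat : ∀ a m t, m ≤ t → MeasurableSet[F t] {ω | Z m ω = a} := fun a m t hmt =>
    hZF m t hmt (measurableSet_singleton a)
  have hS : ∀ a n, MeasurableSet[ℱ n] (S a n) := by
    intro a n
    cases n with
    | zero => exact @MeasurableSet.empty _ (F 0)
    | succ m =>
      exact @MeasurableSet.inter _ (F (m + 1)) _ _ (hat a m (m + 1) (Nat.le_succ m)) (hdownset m)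
  have hcond : ∀ a n, μ[(S a (n + 1)).indicator (1 : Ω → ℝ) | ℱ n] =ᵐ[μ]
      {ω | Z n ω = a}.indicator fun ω => w (R n ω) / (w (L n ω) + w (R n ω)) := by
    intro a n
    have h1 : (S a (n + 1)).indicator (1 : Ω → ℝ) = {ω | Z n ω = a}.indicator
        ({ω | Z (n + 1) ω = Z n ω - 1}.indicator fun _ => (1 : ℝ)) := by
      rw [Set.indicator_indicator]
      rfl
    rw [h1]
    have hint : Integrable ({ω | Z (n + 1) ω = Z n ω - 1}.indicator fun _ => (1 : ℝ)) μ :=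
      (integrable_const 1).indicator (hFle _ _ (hdownset n))
    refine (condExp_indicator (m := F n) hint (hat a n n le_rfl)).trans ?_
    filter_upwards [hdown n] with ω hω
    simp only [Set.indicator, hω]
  have hBC : ∀ᵐ ω ∂μ, ∀ a, (ω ∈ limsup (S a) atTop ↔ Tendsto (fun n => ∑ k ∈ Finset.range n,
      (μ[(S a (k + 1)).indicator (1 : Ω → ℝ) | ℱ k]) ω) atTop atTop) :=
    ae_all_iff.2 fun a => ae_mem_limsup_atTop_iff μ (hS a)
  have hcond' := ae_all_iff.2 fun a => ae_all_iff.2 (hcond a)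
  rw [← compl_compl {ω | ∃ t₀ : ℕ, _}]
  change ∀ᵐ ω ∂μ, ω ∈ {ω | ∃ t₀ : ℕ, _}ᶜ
  filter_upwards [hBC, hcond'] with ω hω hc
  rintro ⟨t₀, -, k, l, -, hconf⟩
  obtain ⟨a, ha, hna⟩ := exists_least_frequently (fun t => Z t ω) t₀ k l hconf
  refine hna ?_
  obtain ⟨N, hN⟩ := eventually_atTop.1 (not_frequently.1 hna)
  have hLN : ∀ t, Z t ω = a → L t ω ≤ N := by
    intro t ht
    rw [hL, ht, ← Finset.card_range N]
    refine Finset.card_le_card fun s hs => ?_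
    rw [Finset.mem_filter] at hs
    rw [Finset.mem_range]
    by_contra hsN
    exact hN s (not_lt.1 hsN) hs.2
  have hmem : ω ∈ limsup (S a) atTop := by
    rw [hω a]
    refine tendsto_sum_of_frequently_ge _ (fun n => ?_) (w 0 / (w N + w 0))
      (div_pos (hw_pos _) (add_pos (hw_pos _) (hw_pos _))) (ha.mono fun n hn => ?_)
    · rw [hc a n]
      exact Set.indicator_nonneg
        (fun x _ => (div_pos (hw_pos _) (add_pos (hw_pos _) (hw_pos _))).le) ω
    · rw [hc a n, Set.indicator_of_mem (show ω ∈ {ω | Z n ω = a} from hn)]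
      have h1 : w 0 ≤ w (R n ω) := hw_mono (Nat.zero_le _)
      have h2 : w (L n ω) ≤ w N := hw_mono (hLN n hn)
      have h3 := hw_pos (L n ω)
      have h4 := hw_pos 0
      rw [div_le_div_iff₀ (by linarith) (by linarith)]
      nlinarith [mul_le_mul h1 h2 h3.le (h4.le.trans h1)]
  rw [mem_limsup_iff_frequently_mem] at hmem
  refine hmem.mono fun n hn => ?_
  cases n with
  | zero => exact hn.elim
  | succ m =>
    obtain ⟨h1, h2⟩ := hn
    simp only [Set.mem_ofPred_eq] at h1 h2
    rw [h2, h1]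
end

section
/- Let f : ℝ → ℝ be twice continuously differentiable with ℓ-Lipschitz derivative (ℓ > 0), i.e., |f′(x) − f′(y)| ≤ ℓ|x − y| for all x, y ∈ ℝ. Fix a step size η with 0 < η < 1/ℓ and an initial point x₀ ∈ ℝ, and define the gradient descent iterates x_{n+1} = x_n − η f′(x_n). Suppose the sequence (x_n)_{n ≥ 0} converges to a point x_s with f″(x_s) ≠ 0. Then the sequence (x_n)_{n ≥ 0} is monotone (either nonincreasing for all n or nondecreasing for all n), hence it converges monotonically to x_s. -/
/-!
Since `η ℓ < 1`, the gradient step `g y = y - η f'(y)` is order preserving: for `a ≤ b`,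
`g b - g a ≥ (1 - η ℓ) (b - a) ≥ 0`. An orbit of an order-preserving map of `ℝ` is monotone, in
the direction of its first step.
-/

/-- If one-dimensional gradient descent with step size `0 < η < 1/ℓ`
on a `C²`, `ℓ`-smooth function converges to a point `x_s` with `f''(x_s) ≠ 0`, then the
whole sequence of iterates is monotone. -/
theorem stmt_4 (f : ℝ → ℝ) (ℓ : ℝ) (hℓ : 0 < ℓ)
    (hf : ContDiff ℝ 2 f)
    (hlip : ∀ a b : ℝ, |deriv f a - deriv f b| ≤ ℓ * |a - b|)
    (η : ℝ) (hη0 : 0 < η) (hη : η < 1 / ℓ)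
    (x₀ : ℝ) (x : ℕ → ℝ) (hx0 : x 0 = x₀)
    (hxrec : ∀ n, x (n + 1) = x n - η * deriv f (x n))
    (xs : ℝ) (hconv : Filter.Tendsto x Filter.atTop (nhds xs))
    (hsec : deriv (deriv f) xs ≠ 0) :
    Monotone x ∨ Antitone x := by
  have hηℓ : η * ℓ < 1 := (lt_div_iff₀ hℓ).1 hη
  have hg : ∀ a b : ℝ, a ≤ b → a - η * deriv f a ≤ b - η * deriv f b := by
    intro a b hab
    have h := (le_abs_self _).trans (hlip b a)
    rw [abs_of_nonneg (sub_nonneg.2 hab)] at h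
    have h1 := mul_le_mul_of_nonneg_left h hη0.le
    have h2 := mul_le_mul_of_nonneg_right hηℓ.le (sub_nonneg.2 hab)
    linarith
  rcases le_total (x 0) (x 1) with h | h
  · refine Or.inl (monotone_nat_of_le_succ fun n => ?_)
    induction n with
    | zero => exact h
    | succ n ih => simpa only [← hxrec] using hg _ _ ih
  · refine Or.inr (antitone_nat_of_succ_le fun n => ?_)
    induction n with
    | zero => exact h
    | succ n ih => simpa only [← hxrec] using hg _ _ ih
end

section
/- Let f : ℝ → ℝ be twice continuously differentiable with ℓ-Lipschitz derivative (ℓ > 0), i.e., |f′(x) − f′(y)| ≤ ℓ|x − y| for all x, y ∈ ℝ. Fix a step size η with 0 < η < 1/ℓ and an initial point x₀ ∈ ℝ, and define the gradient descent iterates x_{n+1} = x_n − η f′(x_n). Suppose the sequence (x_n)_{n ≥ 0} converges to a point x_s with f″(x_s) ≠ 0. Then there exists M > 0 such that the tail sequence (x_n)_{n ≥ M} is monotone, hence converges monotonically to x_s. -/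
/-! The gradient step `g y = y - η * f' y` is monotone on `ℝ`, because `η * f'` is Lipschitz with
constant `η * ℓ < 1`. Every orbit of a monotone self-map of a linear order is monotone, in the
direction of its first step, so the whole sequence of iterates is monotone and any tail will do. -/

/-- If one-dimensional gradient descent with step size `0 < η < 1/ℓ`
on a `C²`, `ℓ`-smooth function converges to a point `x_s` with `f''(x_s) ≠ 0`, then some
tail `(x_n)_{n ≥ M}` (with `M > 0`) of the iterate sequence is monotone. -/
theorem stmt_5 (f : ℝ → ℝ) (ℓ : ℝ) (hℓ : 0 < ℓ)
    (hf : ContDiff ℝ 2 f)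
    (hlip : ∀ a b : ℝ, |deriv f a - deriv f b| ≤ ℓ * |a - b|)
    (η : ℝ) (hη0 : 0 < η) (hη : η < 1 / ℓ)
    (x₀ : ℝ) (x : ℕ → ℝ) (hx0 : x 0 = x₀)
    (hxrec : ∀ n, x (n + 1) = x n - η * deriv f (x n))
    (xs : ℝ) (hconv : Filter.Tendsto x Filter.atTop (nhds xs))
    (hsec : deriv (deriv f) xs ≠ 0) :
    ∃ M : ℕ, 0 < M ∧
      (Monotone (fun n => x (n + M)) ∨ Antitone (fun n => x (n + M))) := by
  have hηℓ : η * ℓ < 1 := (lt_div_iff₀ hℓ).1 hη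
  have hg : Monotone fun y => y - η * deriv f y := by
    intro a b hab
    have h1 : deriv f b - deriv f a ≤ ℓ * (b - a) := by
      simpa [abs_of_nonneg (sub_nonneg.2 hab)] using (le_abs_self _).trans (hlip b a)
    have h2 := mul_le_mul_of_nonneg_left h1 hη0.le
    have h3 := mul_le_mul_of_nonneg_right hηℓ.le (sub_nonneg.2 hab)
    dsimp only
    linarith
  refine ⟨1, one_pos, ?_⟩
  rcases le_total (x 0) (x 1) with h | h
  · left
    have key : ∀ n, x n ≤ x (n + 1) := by
      intro n
      induction n with
      | zero => exact h
      | succ k ih =>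
        rw [hxrec (k + 1), hxrec k]
        simpa only [hxrec k] using hg ih
    exact fun a b hab => monotone_nat_of_le_succ key (Nat.add_le_add_right hab 1)
  · right
    have key : ∀ n, x (n + 1) ≤ x n := by
      intro n
      induction n with
      | zero => exact h
      | succ k ih =>
        rw [hxrec (k + 1), hxrec k]
        simpa only [hxrec k] using hg ih
    exact fun a b hab => antitone_nat_of_succ_le key (Nat.add_le_add_right hab 1)
end
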